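/- Let μ be a partition of m ≥ 1 with largest part μ_1, let k ≥ μ_1, let CS(μ,k) be the set of conjugate-semistandard μ-tableaux with all entries in {1,…,k}, let n = |CS(μ,k)| and d = mn/k (an integer). Then the family CS(μ,k), a conjugate-semistandard tableau family of shape μ^n, has weight γ with γ_j = d for 1 ≤ j ≤ k and γ_j = 0 for j > k, hence type equal to the rectangular partition (k^d) with d parts all equal to k. Moreover, for every conjugate-semistandard tableau family S of shape μ^n whose weight is weakly decreasing, the type of S is greater than or equal to (k^d) in the lexicographic order on partitions, and CS(μ,k) is the only family of shape μ^n whose type equals (k^d). -/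

import Mathlib

/-!
The substance is that all entries `1, …, k` occur equally often in `CS(μ,k)`; the minimality and
uniqueness then follow from the first part of the type alone.

Equidistribution (`sum_entries_succ`): for each `e` a Bender–Knuth involution `bk e` preserves
`CS(μ,k)` and exchanges the number of entries `e` with the number of entries `e + 1`. Call a box
free if its entry is `e` or `e + 1` and no other entry of its row is. The set of free boxes depends
only on the tableau with `e` and `e + 1` identified. In each column the involution reverses the
order of the free boxes and exchanges `e` with `e + 1` on them. A row with a non-free entry in
`{e, e + 1}` contains both `e` and `e + 1`, so non-free boxes contribute equally to both counts.

Minimality and uniqueness (`eq_or_lt_conjOf`): a family with weakly decreasing weight whose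
entries do not all lie in `{1, …, k}` has positive weight at `1, …, k + 1`, so the first part of
its type exceeds `k`. A family of the same size as `CS(μ,k)` with all its entries in `{1, …, k}`
is contained in `CS(μ,k)`, hence equal to it.
-/

/-- The boxes of the Young diagram of `μ : ℕ → ℕ`, zero-indexed:
row `i` consists of the boxes `(i, j)` for `j < μ i`. -/
abbrev Box (μ : ℕ → ℕ) : Type := {p : ℕ × ℕ // p.2 < μ p.1}

/-- The multiset of entries of the tableau `t` in row `i`. -/
def rowM (μ : ℕ → ℕ) {Ω : Type*} (t : Box μ → Ω) (i : ℕ) : Multiset Ω :=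
  ((Finset.range (μ i)).attach.val).map fun j => t ⟨(i, j.1), Finset.mem_range.mp j.2⟩

/-- A `μ`-tableau with entries in the positive integers is conjugate-semistandard if its rows are
strictly increasing and its columns are weakly increasing. -/
def ConjSemistandard (μ : ℕ → ℕ) (t : Box μ → ℕ) : Prop :=
  (∀ b, 1 ≤ t b) ∧
  (∀ i j j' (h : j < μ i) (h' : j' < μ i), j < j' → t ⟨(i, j), h⟩ < t ⟨(i, j'), h'⟩) ∧
  (∀ i i' j (h : j < μ i) (h' : j < μ i'), i < i' → t ⟨(i, j), h⟩ ≤ t ⟨(i', j), h'⟩)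

/-- The number of boxes of the tableau `t` (whose shape has at most `k` rows) with entry `e`. -/
def entryCount (μ : ℕ → ℕ) (k : ℕ) (t : Box μ → ℕ) (e : ℕ) : ℕ :=
  ∑ i ∈ Finset.range k, (rowM μ t i).count e

/-- The weight of a family of tableaux: `familyWeight μ k T e` is the total number of boxes with
entry `e` over all the tableaux in `T`. -/
def familyWeight (μ : ℕ → ℕ) (k : ℕ) (T : Finset (Box μ → ℕ)) (e : ℕ) : ℕ :=
  ∑ t ∈ T, entryCount μ k t e

/-- For conjugate-semistandard tableaux (whose rows are strictly increasing), `v` majorizes `u`,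
written `u ⪯_maj v`, exactly when each row of `v` majorizes the corresponding row of `u`,
i.e. when the entries compare box-by-box. -/
def Maj (μ : ℕ → ℕ) (u v : Box μ → ℕ) : Prop := ∀ b, u b ≤ v b

/-- A conjugate-semistandard tableau family is closed if it is downwards closed under the
majorization order. -/
def ClosedFamily (μ : ℕ → ℕ) (T : Finset (Box μ → ℕ)) : Prop :=
  ∀ v ∈ T, ∀ u, ConjSemistandard μ u → Maj μ u v → u ∈ T

/-- A (1-indexed) weight `w` is weakly decreasing when `w (j+1) ≤ w j` for all `j ≥ 1`. -/
def WeaklyDecr (w : ℕ → ℕ) : Prop := ∀ j, 1 ≤ j → w (j + 1) ≤ w j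

/-- The conjugate of a (1-indexed) finitely supported sequence `w` whose support is contained in
`{1, …, N}`:  `conjOf w N i = #{j ≥ 1 : w j ≥ i}`. -/
def conjOf (w : ℕ → ℕ) (N : ℕ) (i : ℕ) : ℕ :=
  ((Finset.Icc 1 N).filter fun j => i ≤ w j).card

/-- Dominance order on (1-indexed) sequences: `f ⊴ g` iff every partial sum of `f` is at most the
corresponding partial sum of `g`. -/
def DomLE (f g : ℕ → ℕ) : Prop :=
  ∀ s, ∑ j ∈ Finset.Icc 1 s, f j ≤ ∑ j ∈ Finset.Icc 1 s, g j

/-- Strict lexicographic order on (1-indexed) sequences. -/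
def LexLT (f g : ℕ → ℕ) : Prop :=
  ∃ j, 1 ≤ j ∧ (∀ j', 1 ≤ j' → j' < j → f j' = g j') ∧ f j < g j

/-- Lexicographic order on (1-indexed) sequences. -/
def LexLE (f g : ℕ → ℕ) : Prop := (∀ j, 1 ≤ j → f j = g j) ∨ LexLT f g

/-! ### Counting entries over a finite set of boxes -/

/-- The boxes listed row by row, for a shape with at most `kr` rows. -/
def boxEquiv (μ : ℕ → ℕ) (kr : ℕ) (hkr : ∀ i, kr ≤ i → μ i = 0) :
    Box μ ≃ (Σ i : Fin kr, Fin (μ i)) where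
  toFun b := ⟨⟨b.1.1, by
    by_contra h
    have h1 := hkr b.1.1 (by omega)
    have h2 := b.2
    omega⟩, ⟨b.1.2, b.2⟩⟩
  invFun s := ⟨(s.1, s.2), s.2.2⟩
  left_inv _ := rfl
  right_inv _ := rfl

theorem row_lt {μ : ℕ → ℕ} {kr : ℕ} (hkr : ∀ i, kr ≤ i → μ i = 0) (b : Box μ) : b.1.1 < kr :=
  (boxEquiv μ kr hkr b).1.2

theorem card_box {μ : ℕ → ℕ} [Fintype (Box μ)] {kr : ℕ} (hkr : ∀ i, kr ≤ i → μ i = 0) :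
    Fintype.card (Box μ) = ∑ i ∈ Finset.range kr, μ i := by
  rw [Fintype.card_congr (boxEquiv μ kr hkr), Fintype.card_sigma, Finset.sum_range]
  simp

theorem count_rowM {μ : ℕ → ℕ} [Fintype (Box μ)] (t : Box μ → ℕ) (i e : ℕ) :
    (rowM μ t i).count e
      = ((Finset.univ.filter fun b : Box μ => t b = e).filter fun b => b.1.1 = i).card := by
  unfold rowM
  rw [Multiset.count_map]
  change ((Finset.range (μ i)).attach.filter
    (fun j => e = t ⟨(i, j.1), Finset.mem_range.mp j.2⟩)).card = _
  refine Finset.card_bij (fun j _ => (⟨(i, j.1), Finset.mem_range.mp j.2⟩ : Box μ)) ?_ ?_ ?_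
  · intro j hj
    simp only [Finset.mem_filter, Finset.mem_attach, true_and] at hj
    simp [← hj]
  · intro j _ j' _ h
    simp only [Subtype.mk.injEq, Prod.mk.injEq, true_and] at h
    exact Subtype.ext h
  · rintro ⟨⟨r, c⟩, hb⟩ h
    simp only [Finset.mem_filter, Finset.mem_univ, true_and] at h
    obtain ⟨h1, rfl⟩ := h
    exact ⟨⟨c, Finset.mem_range.mpr hb⟩, by simp [h1], rfl⟩

theorem entryCount_eq {μ : ℕ → ℕ} [Fintype (Box μ)] {kr : ℕ} (hkr : ∀ i, kr ≤ i → μ i = 0)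
    (t : Box μ → ℕ) (e : ℕ) :
    entryCount μ kr t e = (Finset.univ.filter fun b : Box μ => t b = e).card := by
  unfold entryCount
  rw [Finset.card_eq_sum_card_fiberwise (f := fun b : Box μ => b.1.1) (t := Finset.range kr)]
  · exact Finset.sum_congr rfl fun i _ => count_rowM t i e
  · intro b _
    simpa using row_lt hkr b

theorem sum_entryCount {μ : ℕ → ℕ} [Fintype (Box μ)] {kr : ℕ} (hkr : ∀ i, kr ≤ i → μ i = 0)
    (t : Box μ → ℕ) (N : ℕ) :
    ∑ e ∈ Finset.Icc 1 N, entryCount μ kr t e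
      = (Finset.univ.filter fun b : Box μ => t b ∈ Finset.Icc 1 N).card := by
  rw [Finset.card_eq_sum_card_fiberwise (f := t) (t := Finset.Icc 1 N)]
  · refine Finset.sum_congr rfl fun e he => ?_
    rw [entryCount_eq hkr, Finset.filter_filter]
    congr 1
    ext b
    simp only [Finset.mem_filter, Finset.mem_univ, true_and]
    constructor
    · rintro rfl
      exact ⟨he, rfl⟩
    · exact fun h => h.2
  · intro b hb
    simpa using hb

/-! ### Reversing a finite set of natural numbers -/

/-- The order-reversing involution of the finite set `A`, extended by the identity outside `A`. -/
def revOn (A : Finset ℕ) (x : ℕ) : ℕ :=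
  if h : x ∈ A then (A.orderIsoOfFin rfl (Fin.rev ((A.orderIsoOfFin rfl).symm ⟨x, h⟩))).1 else x

theorem revOn_mem {A : Finset ℕ} {x : ℕ} (h : x ∈ A) : revOn A x ∈ A := by
  unfold revOn
  rw [dif_pos h]
  exact Subtype.property _

theorem revOn_revOn {A : Finset ℕ} {x : ℕ} (h : x ∈ A) : revOn A (revOn A x) = x := by
  have h2 := revOn_mem h
  have : (⟨revOn A x, h2⟩ : A)
      = A.orderIsoOfFin rfl (Fin.rev ((A.orderIsoOfFin rfl).symm ⟨x, h⟩)) := by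
    apply Subtype.ext
    simp only [revOn, dif_pos h]
  rw [revOn, dif_pos h2, this]
  simp

theorem revOn_lt {A : Finset ℕ} {x y : ℕ} (hx : x ∈ A) (hy : y ∈ A) (h : x < y) :
    revOn A y < revOn A x := by
  unfold revOn
  rw [dif_pos hx, dif_pos hy]
  have : (⟨x, hx⟩ : A) < ⟨y, hy⟩ := h
  simpa using this

/-! ### The Bender–Knuth involution -/

/-- A box is free (with respect to `e`) if its entry is `e` or `e + 1` and it is the only such
box of its row. -/
def FreeBox {μ : ℕ → ℕ} (e : ℕ) (t : Box μ → ℕ) (b : Box μ) : Prop :=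
  (t b = e ∨ t b = e + 1) ∧ ∀ b' : Box μ, b'.1.1 = b.1.1 → (t b' = e ∨ t b' = e + 1) → b' = b

open Classical in
/-- The rows of the free boxes in column `c`. -/
noncomputable def freeRows {μ : ℕ → ℕ} (kr e : ℕ) (t : Box μ → ℕ) (c : ℕ) : Finset ℕ :=
  (Finset.range kr).filter fun i => ∃ h : c < μ i, FreeBox e t ⟨(i, c), h⟩

open Classical in
/-- The reflection of the free boxes within their columns; other boxes are fixed. -/
noncomputable def flipBox {μ : ℕ → ℕ} (kr e : ℕ) (t : Box μ → ℕ) (b : Box μ) : Box μ :=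
  if h : b.1.2 < μ (revOn (freeRows kr e t b.1.2) b.1.1) then
    ⟨(revOn (freeRows kr e t b.1.2) b.1.1, b.1.2), h⟩
  else b

open Classical in
/-- The Bender–Knuth involution: free boxes are reflected within their columns, and `e` and
`e + 1` are exchanged on them, which is the map `x ↦ 2 * e + 1 - x`. -/
noncomputable def bk {μ : ℕ → ℕ} (kr e : ℕ) (t : Box μ → ℕ) (b : Box μ) : ℕ :=
  if FreeBox e t b then 2 * e + 1 - t (flipBox kr e t b) else t b

section
variable {μ : ℕ → ℕ} {kr : ℕ} (e : ℕ) (t : Box μ → ℕ)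

open Classical in
theorem mem_freeRows_iff {c i : ℕ} :
    i ∈ freeRows kr e t c ↔ i < kr ∧ ∃ h : c < μ i, FreeBox e t ⟨(i, c), h⟩ := by
  unfold freeRows
  rw [Finset.mem_filter, Finset.mem_range]

theorem mem_freeRows (hkr : ∀ i, kr ≤ i → μ i = 0) {b : Box μ} :
    b.1.1 ∈ freeRows kr e t b.1.2 ↔ FreeBox e t b := by
  have := row_lt hkr b
  have h2 := b.2
  rw [mem_freeRows_iff]
  exact ⟨fun h => h.2.2, fun h => ⟨this, h2, h⟩⟩

/-- On a free box `flipBox` takes its intended value, which is again a free box. -/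
theorem flipBox_spec (hkr : ∀ i, kr ≤ i → μ i = 0) {b : Box μ} (hb : FreeBox e t b) :
    (flipBox kr e t b).1 = (revOn (freeRows kr e t b.1.2) b.1.1, b.1.2) ∧
      FreeBox e t (flipBox kr e t b) := by
  have h1 := revOn_mem ((mem_freeRows e t hkr).2 hb)
  obtain ⟨-, h2, h3⟩ := (mem_freeRows_iff e t).1 h1
  unfold flipBox
  rw [dif_pos h2]
  exact ⟨rfl, h3⟩

theorem flipBox_flipBox (hkr : ∀ i, kr ≤ i → μ i = 0) {b : Box μ} (hb : FreeBox e t b) :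
    flipBox kr e t (flipBox kr e t b) = b := by
  obtain ⟨h1, h2⟩ := flipBox_spec e t hkr hb
  obtain ⟨h3, -⟩ := flipBox_spec e t hkr h2
  apply Subtype.ext
  rw [h3, h1]
  simp only [revOn_revOn ((mem_freeRows e t hkr).2 hb)]

theorem bk_of_free {b : Box μ} (hb : FreeBox e t b) :
    bk kr e t b = 2 * e + 1 - t (flipBox kr e t b) := if_pos hb

theorem bk_of_not_free {b : Box μ} (hb : ¬ FreeBox e t b) : bk kr e t b = t b := if_neg hb

theorem bk_mem_of_free (hkr : ∀ i, kr ≤ i → μ i = 0) {b : Box μ} (hb : FreeBox e t b) :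
    bk kr e t b = e ∨ bk kr e t b = e + 1 := by
  have h := (flipBox_spec e t hkr hb).2.1
  rw [bk_of_free e t hb]
  omega

/-- The involution does not change the tableau obtained by identifying `e` and `e + 1`. -/
theorem bk_mem_iff (hkr : ∀ i, kr ≤ i → μ i = 0) (b : Box μ) :
    (bk kr e t b = e ∨ bk kr e t b = e + 1) ↔ (t b = e ∨ t b = e + 1) := by
  by_cases hb : FreeBox e t b
  · exact iff_of_true (bk_mem_of_free e t hkr hb) hb.1
  · rw [bk_of_not_free e t hb]

theorem freeBox_bk (hkr : ∀ i, kr ≤ i → μ i = 0) : FreeBox e (bk kr e t) = FreeBox e t := by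
  funext b
  unfold FreeBox
  simp only [bk_mem_iff e t hkr]

theorem flipBox_bk (hkr : ∀ i, kr ≤ i → μ i = 0) :
    flipBox kr e (bk kr e t) = flipBox kr e t := by
  have h : freeRows (μ := μ) kr e (bk kr e t) = freeRows kr e t := by
    funext c
    ext i
    rw [mem_freeRows_iff, mem_freeRows_iff, freeBox_bk e t hkr]
  funext b
  unfold flipBox
  rw [h]

theorem bk_bk (hkr : ∀ i, kr ≤ i → μ i = 0) : bk kr e (bk kr e t) = t := by
  funext b
  by_cases hb : FreeBox e t b
  · have h2 := (flipBox_spec e t hkr hb).2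
    rw [bk_of_free _ _ (by rwa [freeBox_bk e t hkr]), flipBox_bk e t hkr, bk_of_free e t h2,
      flipBox_flipBox e t hkr hb]
    have := hb.1
    omega
  · rw [bk_of_not_free _ _ (by rwa [freeBox_bk e t hkr]), bk_of_not_free e t hb]

/-- A box with entry in `{e, e + 1}` that is not free has a partner in its row. -/
theorem exists_partner {b : Box μ} (h : t b = e ∨ t b = e + 1) (hb : ¬ FreeBox e t b) :
    ∃ b' : Box μ, b'.1.1 = b.1.1 ∧ (t b' = e ∨ t b' = e + 1) ∧ b' ≠ b := by
  by_contra! hc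
  exact hb ⟨h, hc⟩

variable {t}

theorem lt_of_col_lt (ht : ConjSemistandard μ t) {b b' : Box μ} (hr : b.1.1 = b'.1.1)
    (hc : b.1.2 < b'.1.2) : t b < t b' := by
  obtain ⟨⟨i, j⟩, h⟩ := b
  obtain ⟨⟨i', j'⟩, h'⟩ := b'
  obtain rfl : i = i' := hr
  exact ht.2.1 i j j' h h' hc

theorem le_of_row_lt (ht : ConjSemistandard μ t) {b b' : Box μ} (hc : b.1.2 = b'.1.2)
    (hr : b.1.1 < b'.1.1) : t b ≤ t b' := by
  obtain ⟨⟨i, j⟩, h⟩ := b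
  obtain ⟨⟨i', j'⟩, h'⟩ := b'
  obtain rfl : j = j' := hc
  exact ht.2.2 i i' j h h' hr

theorem box_ext {b b' : Box μ} (hr : b.1.1 = b'.1.1) (hc : b.1.2 = b'.1.2) : b = b' :=
  Subtype.ext (Prod.ext hr hc)

/-- Rows are strictly increasing, so a box is determined by its row and its entry. -/
theorem eq_of_row_of_entry (ht : ConjSemistandard μ t) {b b' : Box μ} (hr : b.1.1 = b'.1.1)
    (h : t b = t b') : b = b' := by
  rcases lt_trichotomy b.1.2 b'.1.2 with hc | hc | hc
  · exact absurd h (lt_of_col_lt ht hr hc).ne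
  · exact box_ext hr hc
  · exact absurd h (lt_of_col_lt ht hr.symm hc).ne'

theorem col_lt_of_lt (ht : ConjSemistandard μ t) {b b' : Box μ} (hr : b.1.1 = b'.1.1)
    (h : t b < t b') : b.1.2 < b'.1.2 := by
  by_contra hc
  rcases (not_lt.1 hc).lt_or_eq with hc | hc
  · exact absurd (lt_of_col_lt ht hr.symm hc) (by omega)
  · rw [box_ext hr hc.symm] at h
    omega

theorem exists_succ_of_not_free (ht : ConjSemistandard μ t) {b : Box μ} (h : t b = e)
    (hb : ¬ FreeBox e t b) : ∃ b' : Box μ, b'.1.1 = b.1.1 ∧ t b' = e + 1 := by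
  obtain ⟨b', h1, h2 | h2, h3⟩ := exists_partner e t (Or.inl h) hb
  · exact absurd (eq_of_row_of_entry ht h1 (h2.trans h.symm)) h3
  · exact ⟨b', h1, h2⟩

theorem exists_pred_of_not_free (ht : ConjSemistandard μ t) {b : Box μ} (h : t b = e + 1)
    (hb : ¬ FreeBox e t b) : ∃ b' : Box μ, b'.1.1 = b.1.1 ∧ t b' = e := by
  obtain ⟨b', h1, h2 | h2, h3⟩ := exists_partner e t (Or.inr h) hb
  · exact ⟨b', h1, h2⟩
  · exact absurd (eq_of_row_of_entry ht h1 (h2.trans h.symm)) h3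

/-- Below a free box there is no non-free entry `e`: its partner `e + 1` would lie below an entry
`e + 1` in the row of the free box. -/
theorem succ_le_of_free_above (hμ : Antitone μ) (ht : ConjSemistandard μ t) {b b' : Box μ}
    (hc : b.1.2 = b'.1.2) (hr : b.1.1 < b'.1.1) (hb : FreeBox e t b) (hb' : ¬ FreeBox e t b') :
    e + 1 ≤ t b' := by
  have h1 := le_of_row_lt ht hc hr
  have h2 := hb.1
  by_contra h3
  have h4 : t b' = e := by omega
  obtain ⟨p, hp1, hp2⟩ := exists_succ_of_not_free e ht h4 hb'
  have hp3 : b'.1.2 < p.1.2 := col_lt_of_lt ht hp1.symm (by omega)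
  let q : Box μ := ⟨(b.1.1, p.1.2), p.2.trans_le (hμ (by omega))⟩
  have hq1 : t b < t q := lt_of_col_lt ht rfl (by simpa [q, hc] using hp3)
  have hq2 : t q ≤ t p := le_of_row_lt ht rfl (by simpa [q, hp1] using hr)
  have hq3 : q = b := hb.2 q rfl (by omega)
  rw [hq3] at hq1
  omega

/-- Above a free box there is no non-free entry `e + 1`: its partner `e` would lie above an entry
`e` in the row of the free box. -/
theorem le_of_free_below (ht : ConjSemistandard μ t) {b b' : Box μ}
    (hc : b.1.2 = b'.1.2) (hr : b.1.1 < b'.1.1) (hb : ¬ FreeBox e t b) (hb' : FreeBox e t b') :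
    t b ≤ e := by
  have h1 := le_of_row_lt ht hc hr
  have h2 := hb'.1
  by_contra h3
  have h4 : t b = e + 1 := by omega
  obtain ⟨p, hp1, hp2⟩ := exists_pred_of_not_free e ht h4 hb
  have hp3 : p.1.2 < b.1.2 := col_lt_of_lt ht hp1 (by omega)
  have hp4 : p.1.2 < b'.1.2 := by omega
  let q : Box μ := ⟨(b'.1.1, p.1.2), hp4.trans b'.2⟩
  have hq1 : t q < t b' := lt_of_col_lt ht rfl hp4
  have hq2 : t p ≤ t q := le_of_row_lt ht rfl (by simpa [q, hp1] using hr)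
  have hq3 : q = b' := hb'.2 q rfl (by omega)
  rw [hq3] at hq1
  omega

theorem bk_conjSemistandard (hμ : Antitone μ) (hkr : ∀ i, kr ≤ i → μ i = 0) (he : 1 ≤ e)
    (ht : ConjSemistandard μ t) : ConjSemistandard μ (bk kr e t) := by
  refine ⟨fun b => ?_, fun i j j' h h' hj => ?_, fun i i' j h h' hi => ?_⟩
  · by_cases hb : FreeBox e t b
    · have := bk_mem_of_free e t hkr hb
      omega
    · rw [bk_of_not_free e t hb]
      exact ht.1 b
  · have hlt := ht.2.1 i j j' h h' hj
    have hne : (⟨(i, j), h⟩ : Box μ) ≠ ⟨(i, j'), h'⟩ := by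
      simp only [ne_eq, Subtype.mk.injEq, Prod.mk.injEq, true_and]
      omega
    generalize hb : (⟨(i, j), h⟩ : Box μ) = b at *
    generalize hb' : (⟨(i, j'), h'⟩ : Box μ) = b' at *
    have hr : b.1.1 = b'.1.1 := by rw [← hb, ← hb']
    by_cases f : FreeBox e t b <;> by_cases f' : FreeBox e t b'
    · exact absurd (f'.2 b hr f.1) hne
    · have h1 := bk_mem_of_free e t hkr f
      have h2 : ¬ (t b' = e ∨ t b' = e + 1) := fun h => hne (f.2 b' hr.symm h).symm
      have h3 := f.1
      rw [bk_of_not_free e t f']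
      omega
    · have h1 := bk_mem_of_free e t hkr f'
      have h2 : ¬ (t b = e ∨ t b = e + 1) := fun h => hne (f'.2 b hr h)
      have h3 := f'.1
      rw [bk_of_not_free e t f]
      omega
    · rwa [bk_of_not_free e t f, bk_of_not_free e t f']
  · have hle := ht.2.2 i i' j h h' hi
    generalize hb : (⟨(i, j), h⟩ : Box μ) = b at *
    generalize hb' : (⟨(i', j), h'⟩ : Box μ) = b' at *
    have hc : b.1.2 = b'.1.2 := by rw [← hb, ← hb']
    have hr : b.1.1 < b'.1.1 := by rw [← hb, ← hb']; exact hi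
    by_cases f : FreeBox e t b <;> by_cases f' : FreeBox e t b'
    · rw [bk_of_free e t f, bk_of_free e t f']
      obtain ⟨s1, -⟩ := flipBox_spec e t hkr f
      obtain ⟨s2, -⟩ := flipBox_spec e t hkr f'
      have m1 := (mem_freeRows e t hkr).2 f
      have m2 := (mem_freeRows e t hkr).2 f'
      rw [← hc] at m2 s2
      have := le_of_row_lt ht (b := flipBox kr e t b') (b' := flipBox kr e t b)
        (by rw [s1, s2]) (by rw [s1, s2]; exact revOn_lt m1 m2 hr)
      omega
    · have h1 := bk_mem_of_free e t hkr f
      have h2 := succ_le_of_free_above e hμ ht hc hr f f'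
      rw [bk_of_not_free e t f']
      omega
    · have h1 := bk_mem_of_free e t hkr f'
      have h2 := le_of_free_below e ht hc hr f f'
      rw [bk_of_not_free e t f]
      omega
    · rwa [bk_of_not_free e t f, bk_of_not_free e t f']

theorem bk_le {k : ℕ} (hkr : ∀ i, kr ≤ i → μ i = 0) (he : e + 1 ≤ k) (hk : ∀ b, t b ≤ k)
    (b : Box μ) : bk kr e t b ≤ k := by
  by_cases hb : FreeBox e t b
  · have := bk_mem_of_free e t hkr hb
    omega
  · rw [bk_of_not_free e t hb]
    exact hk b

open Classical in
/-- Free boxes match up under `flipBox`; for the non-free boxes both counts equal the number of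
rows containing `e` and `e + 1`. -/
theorem card_bk_eq [Fintype (Box μ)] (hkr : ∀ i, kr ≤ i → μ i = 0) (ht : ConjSemistandard μ t) :
    (Finset.univ.filter fun b : Box μ => bk kr e t b = e).card
      = (Finset.univ.filter fun b : Box μ => t b = e + 1).card := by
  rw [← Finset.card_filter_add_card_filter_not (s := Finset.univ.filter fun b => bk kr e t b = e)
      (FreeBox e t),
    ← Finset.card_filter_add_card_filter_not (s := Finset.univ.filter fun b => t b = e + 1)
      (FreeBox e t)]
  congr 1
  · refine Finset.card_nbij' (flipBox kr e t) (flipBox kr e t) ?_ ?_ ?_ ?_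
    · intro b hb
      simp only [Finset.coe_filter, Finset.mem_filter, Finset.mem_univ, true_and,
        Set.mem_ofPred_eq] at hb ⊢
      obtain ⟨h1, h2⟩ := hb
      have h3 := (flipBox_spec e t hkr h2).2
      have h4 := h3.1
      rw [bk_of_free e t h2] at h1
      exact ⟨by omega, h3⟩
    · intro b hb
      simp only [Finset.coe_filter, Finset.mem_filter, Finset.mem_univ, true_and,
        Set.mem_ofPred_eq] at hb ⊢
      obtain ⟨h1, h2⟩ := hb
      have h3 := (flipBox_spec e t hkr h2).2
      rw [bk_of_free e t h3, flipBox_flipBox e t hkr h2]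
      exact ⟨by omega, h3⟩
    · intro b hb
      exact flipBox_flipBox e t hkr (Finset.mem_filter.1 hb).2
    · intro b hb
      exact flipBox_flipBox e t hkr (Finset.mem_filter.1 hb).2
  · -- both sides count the rows that contain `e` as well as `e + 1`
    have inj : ∀ x : ℕ, Set.InjOn (fun b : Box μ => b.1.1) {b | t b = x} :=
      fun x b hb b' hb' h => eq_of_row_of_entry ht h (Eq.trans hb (Eq.symm hb'))
    rw [← Finset.card_image_of_injOn (f := fun b : Box μ => b.1.1) ((inj e).mono ?_),
      ← Finset.card_image_of_injOn (f := fun b : Box μ => b.1.1) ((inj (e + 1)).mono ?_)]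
    · congr 1
      ext i
      simp only [Finset.mem_image, Finset.mem_filter, Finset.mem_univ, true_and]
      constructor
      · rintro ⟨b, ⟨h1, h2⟩, rfl⟩
        rw [bk_of_not_free e t h2] at h1
        obtain ⟨p, hp1, hp2⟩ := exists_succ_of_not_free e ht h1 h2
        refine ⟨p, ⟨hp2, fun hf => ?_⟩, hp1⟩
        rw [hf.2 b hp1.symm (Or.inl h1)] at h1
        omega
      · rintro ⟨b, ⟨h1, h2⟩, rfl⟩
        obtain ⟨p, hp1, hp2⟩ := exists_pred_of_not_free e ht h1 h2
        have hp3 : ¬ FreeBox e t p := by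
          intro hf
          rw [hf.2 b hp1.symm (Or.inr h1)] at h1
          omega
        exact ⟨p, ⟨by rw [bk_of_not_free e t hp3, hp2], hp3⟩, hp1⟩
    · intro b hb
      exact (Finset.mem_filter.1 (Finset.mem_filter.1 hb).1).2
    · intro b hb
      obtain ⟨h1, h2⟩ := Finset.mem_filter.1 hb
      have h3 := (Finset.mem_filter.1 h1).2
      rwa [bk_of_not_free e t h2] at h3

end

/-! ### Weights and types of families -/

/-- In `CS(μ,k)` the entries `e` and `e + 1` occur equally often. -/
theorem sum_entries_succ {μ : ℕ → ℕ} [Fintype (Box μ)] {kr k : ℕ} (hμ : Antitone μ)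
    (hkr : ∀ i, kr ≤ i → μ i = 0) {S : Finset (Box μ → ℕ)}
    (hS : ∀ t, t ∈ S ↔ (ConjSemistandard μ t ∧ ∀ b, t b ≤ k)) {e : ℕ} (he : 1 ≤ e)
    (hek : e + 1 ≤ k) : familyWeight μ kr S (e + 1) = familyWeight μ kr S e := by
  have hmem : ∀ t ∈ S, bk kr e t ∈ S := fun t ht =>
    (hS _).2 ⟨bk_conjSemistandard e hμ hkr he ((hS t).1 ht).1, bk_le e hkr hek ((hS t).1 ht).2⟩
  refine Finset.sum_nbij' (bk kr e) (bk kr e) hmem hmem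
    (fun t _ => bk_bk e t hkr) (fun t _ => bk_bk e t hkr) fun t ht => ?_
  rw [entryCount_eq hkr, entryCount_eq hkr, card_bk_eq e hkr ((hS t).1 ht).1]

theorem sum_familyWeight_le {μ : ℕ → ℕ} [Fintype (Box μ)] {kr : ℕ}
    (hkr : ∀ i, kr ≤ i → μ i = 0) (T : Finset (Box μ → ℕ)) (N : ℕ) :
    ∑ e ∈ Finset.Icc 1 N, familyWeight μ kr T e ≤ Fintype.card (Box μ) * T.card := by
  unfold familyWeight
  rw [Finset.sum_comm, mul_comm, ← smul_eq_mul]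
  refine Finset.sum_le_card_nsmul _ _ _ fun t _ => ?_
  rw [sum_entryCount hkr]
  exact Finset.card_le_univ _

theorem sum_familyWeight_eq {μ : ℕ → ℕ} [Fintype (Box μ)] {kr : ℕ}
    (hkr : ∀ i, kr ≤ i → μ i = 0) {T : Finset (Box μ → ℕ)} {N : ℕ}
    (hT : ∀ t ∈ T, ∀ b, t b ∈ Finset.Icc 1 N) :
    ∑ e ∈ Finset.Icc 1 N, familyWeight μ kr T e = Fintype.card (Box μ) * T.card := by
  unfold familyWeight
  rw [Finset.sum_comm, mul_comm, ← smul_eq_mul]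
  refine Finset.sum_eq_card_nsmul fun t ht => ?_
  rw [sum_entryCount hkr, Finset.filter_true_of_mem fun b _ => hT t ht b, Finset.card_univ]

theorem familyWeight_pos {μ : ℕ → ℕ} [Fintype (Box μ)] {kr : ℕ}
    (hkr : ∀ i, kr ≤ i → μ i = 0) {T : Finset (Box μ → ℕ)} {t : Box μ → ℕ} (ht : t ∈ T)
    (b : Box μ) : 1 ≤ familyWeight μ kr T (t b) := by
  have h1 : 1 ≤ entryCount μ kr t (t b) := by
    rw [entryCount_eq hkr]
    exact Finset.card_pos.2 ⟨b, by simp⟩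
  exact h1.trans (Finset.single_le_sum (f := fun t' => entryCount μ kr t' (t b))
    (fun _ _ => Nat.zero_le _) ht)

/-- A family of the size of `CS(μ,k)` other than `CS(μ,k)` uses some entry larger than `k`, hence,
its weight being weakly decreasing, all of `1, …, k + 1`. The total weight bounds `k + 1` by the
truncation parameter of `conjOf`, so these entries are all counted. -/
theorem eq_or_lt_conjOf {μ : ℕ → ℕ} [Fintype (Box μ)] {kr k : ℕ}
    (hkr : ∀ i, kr ≤ i → μ i = 0) {S S' : Finset (Box μ → ℕ)}
    (hS : ∀ t, t ∈ S ↔ (ConjSemistandard μ t ∧ ∀ b, t b ≤ k)) (hcard : S'.card = S.card)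
    (hS' : ∀ t ∈ S', ConjSemistandard μ t) (hw : WeaklyDecr (familyWeight μ kr S')) :
    S' = S ∨ k < conjOf (familyWeight μ kr S') (Fintype.card (Box μ) * S'.card) 1 := by
  by_cases hall : ∀ t ∈ S', ∀ b, t b ≤ k
  · exact Or.inl (Finset.eq_of_subset_of_card_le
      (fun t ht => (hS t).2 ⟨hS' t ht, hall t ht⟩) hcard.ge)
  right
  push Not at hall
  obtain ⟨t, ht, b, hb⟩ := hall
  have hanti : ∀ j j', 1 ≤ j → j ≤ j' →
      familyWeight μ kr S' j' ≤ familyWeight μ kr S' j := by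
    intro j j' hj hjj
    induction j', hjj using Nat.le_induction with
    | base => exact le_rfl
    | succ x hx ih => exact (hw x (hj.trans hx)).trans ih
  have hpos : ∀ j ∈ Finset.Icc 1 (k + 1), 1 ≤ familyWeight μ kr S' j := by
    intro j hj
    rw [Finset.mem_Icc] at hj
    exact (familyWeight_pos hkr ht b).trans (hanti j (t b) hj.1 (by omega))
  have hle : k + 1 ≤ Fintype.card (Box μ) * S'.card := by
    refine le_trans ?_ (sum_familyWeight_le hkr S' (k + 1))
    simpa using Finset.card_nsmul_le_sum _ _ 1 hpos
  have hsub : Finset.Icc 1 (k + 1) ⊆ (Finset.Icc 1 (Fintype.card (Box μ) * S'.card)).filter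
      fun j => 1 ≤ familyWeight μ kr S' j := by
    intro j hj
    refine Finset.mem_filter.2 ⟨?_, hpos j hj⟩
    rw [Finset.mem_Icc] at hj ⊢
    omega
  simpa [conjOf] using Finset.card_le_card hsub

/-- **Corollary 8.4 / Conjecture 2.2 of Agaoka (Paget–Wildon).** Let `μ` be a partition of
`m ≥ 1`, let `k ≥ μ_1`, let `CS(μ,k)` (here `S`) be the set of conjugate-semistandard
`μ`-tableaux with all entries in `{1, …, k}`, let `n = |CS(μ,k)|` and let `d = mn/k` (an
integer).  Then `S` has weight `d` at every `j ∈ {1, …, k}` and weight `0` beyond `k`, hence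
type the rectangular partition `(k^d)`; moreover every conjugate-semistandard tableau family of
shape `μ^n` with weakly decreasing weight has type at least `(k^d)` in the lexicographic order,
and `S` is the only family of shape `μ^n` whose type equals `(k^d)`. -/
theorem cs_family_lex_least_type
    (μ : ℕ → ℕ) (hμ : ∀ i, μ (i + 1) ≤ μ i)
    (m kr : ℕ) (hm1 : 1 ≤ m) (hmsum : m = ∑ i ∈ Finset.range kr, μ i)
    (hkr : ∀ i, kr ≤ i → μ i = 0)
    (k : ℕ) (hk1 : 1 ≤ k) (hkμ : μ 0 ≤ k)
    (S : Finset (Box μ → ℕ))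
    (hS : ∀ t, t ∈ S ↔ (ConjSemistandard μ t ∧ ∀ b, t b ≤ k))
    (n : ℕ) (hn : n = S.card)
    (d : ℕ) (hd : d * k = m * n) :
    (∀ j, 1 ≤ j → j ≤ k → familyWeight μ kr S j = d) ∧
    (∀ j, k < j → familyWeight μ kr S j = 0) ∧
    (∀ i, 1 ≤ i → conjOf (familyWeight μ kr S) (m * n) i = if i ≤ d then k else 0) ∧
    (∀ S' : Finset (Box μ → ℕ), S'.card = n → (∀ t ∈ S', ConjSemistandard μ t) →
      WeaklyDecr (familyWeight μ kr S') →
      LexLE (fun i => if i ≤ d then k else 0) (conjOf (familyWeight μ kr S') (m * n))) ∧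
    (∀ S' : Finset (Box μ → ℕ), S'.card = n → (∀ t ∈ S', ConjSemistandard μ t) →
      WeaklyDecr (familyWeight μ kr S') →
      (∀ i, 1 ≤ i → conjOf (familyWeight μ kr S') (m * n) i = if i ≤ d then k else 0) →
      S' = S) := by
  let : Fintype (Box μ) := Fintype.ofEquiv _ (boxEquiv μ kr hkr).symm
  have hanti : Antitone μ := antitone_nat_of_succ_le hμ
  have hm : m = Fintype.card (Box μ) := by rw [card_box hkr, hmsum]
  have hconst : ∀ j, 1 ≤ j → j ≤ k → familyWeight μ kr S j = familyWeight μ kr S 1 := by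
    intro j hj
    induction j, hj using Nat.le_induction with
    | base => exact fun _ => rfl
    | succ x hx ih => exact fun h => (sum_entries_succ hanti hkr hS hx h).trans (ih (by omega))
  have htot : k * familyWeight μ kr S 1 = d * k := by
    have h1 := sum_familyWeight_eq hkr (T := S) (N := k) fun t ht b =>
      Finset.mem_Icc.2 ⟨((hS t).1 ht).1.1 b, ((hS t).1 ht).2 b⟩
    rw [Finset.sum_congr rfl fun j hj =>
      hconst j (Finset.mem_Icc.1 hj).1 (Finset.mem_Icc.1 hj).2] at h1
    simpa [hd, hm, hn] using h1
  have hone : familyWeight μ kr S 1 = d :=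
    Nat.eq_of_mul_eq_mul_left hk1 (htot.trans (mul_comm d k))
  have hA : ∀ j, 1 ≤ j → j ≤ k → familyWeight μ kr S j = d :=
    fun j h1 h2 => (hconst j h1 h2).trans hone
  have hB : ∀ j, k < j → familyWeight μ kr S j = 0 := by
    intro j hj
    refine Finset.sum_eq_zero fun t ht => ?_
    rw [entryCount_eq hkr, Finset.card_eq_zero, Finset.filter_eq_empty_iff]
    intro b _ hb
    have := ((hS t).1 ht).2 b
    omega
  have hC : ∀ i, 1 ≤ i →
      conjOf (familyWeight μ kr S) (m * n) i = if i ≤ d then k else 0 := by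
    intro i hi
    unfold conjOf
    split_ifs with hid
    · have hk : k ≤ m * n := hd ▸ Nat.le_mul_of_pos_left k (hi.trans hid)
      have : (Finset.Icc 1 (m * n)).filter (fun j => i ≤ familyWeight μ kr S j)
          = Finset.Icc 1 k := by
        ext j
        simp only [Finset.mem_filter, Finset.mem_Icc]
        constructor
        · rintro ⟨⟨h1, -⟩, h3⟩
          refine ⟨h1, ?_⟩
          by_contra h
          rw [hB j (by omega)] at h3
          omega
        · rintro ⟨h1, h2⟩
          exact ⟨⟨h1, h2.trans hk⟩, by rwa [hA j h1 h2]⟩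
      rw [this]
      simp
    · rw [Finset.card_eq_zero, Finset.filter_eq_empty_iff]
      intro j hj h
      rcases le_or_gt j k with hjk | hjk
      · rw [hA j (Finset.mem_Icc.1 hj).1 hjk] at h
        exact hid h
      · rw [hB j hjk] at h
        omega
  have hdich : ∀ S' : Finset (Box μ → ℕ), S'.card = n → (∀ t ∈ S', ConjSemistandard μ t) →
      WeaklyDecr (familyWeight μ kr S') →
      S' = S ∨ k < conjOf (familyWeight μ kr S') (m * n) 1 := by
    intro S' h1 h2 h3
    have := eq_or_lt_conjOf hkr hS (h1.trans hn) h2 h3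
    rwa [h1, ← hm] at this
  have hif : (if 1 ≤ d then k else 0) ≤ k := by split_ifs <;> omega
  refine ⟨hA, hB, hC, fun S' h1 h2 h3 => ?_, fun S' h1 h2 h3 h4 => ?_⟩
  · rcases hdich S' h1 h2 h3 with rfl | h
    · exact Or.inl fun j hj => (hC j hj).symm
    · exact Or.inr ⟨1, le_rfl, fun j' _ _ => by omega, hif.trans_lt h⟩
  · refine (hdich S' h1 h2 h3).resolve_right fun h => ?_
    rw [h4 1 le_rfl] at h
    omega
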